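/- Let n ≥ 1 and let γⁿ be the standard Gaussian probability measure on ℝⁿ. Then for every k ≥ 1, λ_k^Lip(ℝⁿ,|·|,γⁿ) ≥ max( (n/e)·k^{1/n} − n , (log k)/log((n+1)·e) ). -/

import Mathlib

open MeasureTheory Filter Topology ENNReal

/-- The local Lipschitz constant `|∇f|(x) = limsup_{y→x} |f(y)-f(x)|/d(y,x)`
(equal to `0` at isolated points, by the convention `Real.sInf ∅ = 0`). -/
noncomputable def localLip {Ω : Type*} [PseudoMetricSpace Ω] (f : Ω → ℝ) (x : Ω) : ℝ :=
  Filter.limsup (fun y => |f y - f x| / dist y x) (nhdsWithin x {x}ᶜ)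

/-- Membership in the metric Sobolev space `W^{1,2}_Lip(Ω,d,μ)`. -/
def memW12Lip {Ω : Type*} [PseudoMetricSpace Ω] [MeasurableSpace Ω]
    (μ : Measure Ω) (f : Ω → ℝ) : Prop :=
  LocallyLipschitz f ∧
    (∫⁻ x, ENNReal.ofReal ((f x) ^ 2) ∂μ) + (∫⁻ x, ENNReal.ofReal ((localLip f x) ^ 2) ∂μ) < ⊤

/-- The `k`-th metric eigenvalue `λ_k^Lip(Ω,d,μ)`: the infimum over `k`-dimensional
linear subspaces `F ⊆ W^{1,2}_Lip` of the supremum of the Rayleigh quotient over `F`. -/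
noncomputable def lambdaLip {Ω : Type*} [PseudoMetricSpace Ω] [MeasurableSpace Ω]
    (μ : Measure Ω) (k : ℕ) : ℝ :=
  sInf { a : ℝ | ∃ F : Submodule ℝ (Ω → ℝ), Module.finrank ℝ F = k ∧
    (∀ f ∈ F, memW12Lip μ f) ∧
    a = sSup { r : ℝ | ∃ f ∈ F, (∫ x, (f x) ^ 2 ∂μ) ≠ 0 ∧
      r = (∫ x, (localLip f x) ^ 2 ∂μ) / (∫ x, (f x) ^ 2 ∂μ) } }

/-- The standard Gaussian probability measure `γⁿ` on `ℝⁿ`, with density proportional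
to `exp(-|x|²/2)` with respect to Lebesgue measure, normalized to total mass one. -/
noncomputable def stdGaussian (n : ℕ) : Measure (EuclideanSpace ℝ (Fin n)) :=
  ((volume.withDensity fun x : EuclideanSpace ℝ (Fin n) =>
      ENNReal.ofReal (Real.exp (-‖x‖ ^ 2 / 2))) Set.univ)⁻¹ •
    volume.withDensity fun x : EuclideanSpace ℝ (Fin n) =>
      ENNReal.ofReal (Real.exp (-‖x‖ ^ 2 / 2))


namespace GaussEig
open MvPolynomial

noncomputable abbrev Rd (n m : ℕ) : Submodule ℝ (MvPolynomial (Fin n) ℝ) := restrictTotalDegree (Fin n) ℝ m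

lemma mem_Rd {n m : ℕ} {p : MvPolynomial (Fin n) ℝ} : p ∈ Rd n m ↔ p.totalDegree ≤ m :=
  mem_restrictTotalDegree _ _ _

lemma Rd_mono {n : ℕ} {a b : ℕ} (h : a ≤ b) : Rd n a ≤ Rd n b := by
  intro p hp
  rw [mem_Rd] at *
  omega

noncomputable def Lop (n : ℕ) : MvPolynomial (Fin n) ℝ →ₗ[ℝ] MvPolynomial (Fin n) ℝ where
  toFun p := ∑ i, (X i * pderiv i p - pderiv i (pderiv i p))
  map_add' p q := by
    simp only [map_add, mul_add]
    rw [← Finset.sum_add_distrib]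
    exact Finset.sum_congr rfl fun i _ => by ring
  map_smul' c p := by
    simp only [Derivation.map_smul, Finset.smul_sum, smul_sub, mul_smul_comm, RingHom.id_apply]
    
lemma Lop_apply {n : ℕ} (p : MvPolynomial (Fin n) ℝ) :
    Lop n p = ∑ i, (X i * pderiv i p - pderiv i (pderiv i p)) := rfl

lemma Rd_induct {n M : ℕ} (T : MvPolynomial (Fin n) ℝ →ₗ[ℝ] MvPolynomial (Fin n) ℝ)
    (W : Submodule ℝ (MvPolynomial (Fin n) ℝ))
    (h : ∀ (s : Fin n →₀ ℕ) (a : ℝ), s.degree ≤ M → T (monomial s a) ∈ W)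
    {p : MvPolynomial (Fin n) ℝ} (hp : p ∈ Rd n M) : T p ∈ W := by
  rw [p.as_sum, map_sum]
  refine Submodule.sum_mem _ fun s hs => h s _ ?_
  rw [mem_Rd] at hp
  refine le_trans ?_ hp
  exact le_totalDegree hs

lemma monomial_mem_Rd {n M : ℕ} (s : Fin n →₀ ℕ) (a : ℝ) (h : s.degree ≤ M) :
    monomial s a ∈ Rd n M := by
  rw [mem_Rd]
  exact (totalDegree_monomial_le _ _).trans h

lemma pderiv_mem {n M : ℕ} (i : Fin n) {p : MvPolynomial (Fin n) ℝ} (hp : p ∈ Rd n (M+1)) :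
    pderiv i p ∈ Rd n M := by
  refine Rd_induct (pderiv i).toLinearMap (Rd n M) ?_ hp
  intro s a hs
  simp only [Derivation.coeFn_coe, pderiv_monomial]
  by_cases h : s i = 0
  · simp [h]
  · apply monomial_mem_Rd
    have : (s - Finsupp.single i 1) + Finsupp.single i 1 = s := by
      apply tsub_add_cancel_of_le
      simp; omega
    have h2 := congrArg Finsupp.degree this
    rw [map_add] at h2
    simp at h2
    omega

lemma pderiv_mem' {n M : ℕ} (i : Fin n) {p : MvPolynomial (Fin n) ℝ} (hp : p ∈ Rd n M) :
    pderiv i p ∈ Rd n M :=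
  pderiv_mem i (Rd_mono (Nat.le_succ M) hp)

lemma Lop_sub_mem {n M : ℕ} {p : MvPolynomial (Fin n) ℝ} (hp : p ∈ Rd n (M+1)) :
    Lop n p - ((M:ℝ)+1) • p ∈ Rd n M := by
  refine Rd_induct (Lop n - ((M:ℝ)+1) • LinearMap.id) (Rd n M) ?_ hp
  intro s a hs
  simp only [LinearMap.sub_apply, LinearMap.smul_apply, LinearMap.id_apply, Lop_apply,
    Finset.sum_sub_distrib, X_mul_pderiv_monomial, ← Finset.sum_smul]
  rw [sub_right_comm]
  refine Submodule.sub_mem _ ?_ (Submodule.sum_mem _ fun i _ => 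
    pderiv_mem' i (pderiv_mem i (monomial_mem_Rd s a hs)))
  rw [← Finsupp.degree_eq_sum, ← Nat.cast_smul_eq_nsmul ℝ, ← sub_smul]
  rcases Nat.lt_or_ge M s.degree with h | h
  · have : s.degree = M + 1 := by omega
    rw [this]; simp
  · exact Submodule.smul_mem _ _ (monomial_mem_Rd s a h)

lemma Lop_mem {n M : ℕ} {p : MvPolynomial (Fin n) ℝ} (hp : p ∈ Rd n M) :
    Lop n p ∈ Rd n M := by
  cases M with
  | zero => 
    rw [mem_Rd, Nat.le_zero, totalDegree_eq_zero_iff_eq_C] at hp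
    rw [hp]
    simp [Lop_apply]
  | succ M =>
    have := Submodule.add_mem _ (Rd_mono (Nat.le_succ M) (Lop_sub_mem hp)) 
      (Submodule.smul_mem _ ((M:ℝ)+1) hp)
    simpa using this

section abstr
variable {n : ℕ} {H : Type*} [NormedAddCommGroup H] [InnerProductSpace ℝ H]
  (T : MvPolynomial (Fin n) ℝ →ₗ[ℝ] H)

noncomputable abbrev Vd (m : ℕ) : Submodule ℝ H := (Rd n m).map T

lemma Vd_mono {a b : ℕ} (h : a ≤ b) : Vd T a ≤ Vd T b := Submodule.map_mono (Rd_mono h)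

lemma spectral (hsymm : ∀ p q, inner ℝ (T (Lop n p)) (T q) = inner ℝ (T p) (T (Lop n q)))
    (m M : ℕ) : ∀ p ∈ Rd n M, T p ∈ (Vd T m)ᗮ →
      ((m:ℝ)+1) * ‖T p‖^2 ≤ inner ℝ (T (Lop n p)) (T p) := by
  have base : ∀ M, M ≤ m → ∀ p ∈ Rd n M, T p ∈ (Vd T m)ᗮ →
      ((m:ℝ)+1) * ‖T p‖^2 ≤ inner ℝ (T (Lop n p)) (T p) := by
    intro M hM p hp hT
    have h0 : T p = 0 := by
      have h1 : T p ∈ Vd T m := Submodule.mem_map_of_mem (Rd_mono hM hp)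
      have := (Submodule.mem_orthogonal _ _).1 hT _ h1
      exact inner_self_eq_zero.1 this
    simp [h0]
  induction M with
  | zero => exact base 0 (Nat.zero_le _)
  | succ M ih =>
    rcases Nat.lt_or_ge m (M+1) with h | h
    swap
    · exact base _ h
    intro p hp hT
    obtain ⟨p', hp', hTp'⟩ := Submodule.mem_map.1 ((Vd T M).starProjection_apply_mem (T p))
    have hw : T (p - p') ∈ (Vd T M)ᗮ := by
      rw [map_sub, hTp']
      exact Submodule.sub_starProjection_mem_orthogonal _
    set w := p - p' with hwdef
    have hpw : p = p' + w := by simp [hwdef]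
    have hwR : w ∈ Rd n (M+1) := Submodule.sub_mem _ hp (Rd_mono (Nat.le_succ M) hp')
    have hp'orth : T p' ∈ (Vd T m)ᗮ := by
      have : T p' = T p - T w := by rw [hpw, map_add]; abel
      rw [this]
      exact Submodule.sub_mem _ hT (Submodule.orthogonal_le (Vd_mono T (by omega)) hw)
    have key : ∀ q ∈ Rd n M, inner ℝ (T q) (T w) = 0 := fun q hq =>
      (Submodule.mem_orthogonal _ _).1 hw _ (Submodule.mem_map_of_mem hq)
    have e1 : inner ℝ (T (Lop n p')) (T w) = 0 := key _ (Lop_mem hp')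
    have e2 : inner ℝ (T (Lop n w)) (T p') = 0 := by
      rw [hsymm, real_inner_comm]; exact e1
    have e3 : inner ℝ (T (Lop n w)) (T w) = ((M:ℝ)+1) * ‖T w‖^2 := by
      have := key _ (Lop_sub_mem hwR)
      rw [map_sub, inner_sub_left, map_smul, inner_smul_left, real_inner_self_eq_norm_sq] at this
      simp at this
      linarith
    have e4 := key _ hp'
    have ih' := ih p' hp' hp'orth
    have hm : ((m:ℝ)+1) ≤ (M:ℝ)+1 := by exact_mod_cast h
    rw [hpw, map_add, map_add, map_add, inner_add_left, inner_add_right, inner_add_right, e1, e2, e3,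
      norm_add_sq_real, e4]
    nlinarith [sq_nonneg ‖T w‖]

end abstr

section gauss
variable {n : ℕ}

abbrev EE (n : ℕ) := EuclideanSpace ℝ (Fin n)

noncomputable def wt (x : EE n) : ℝ := Real.exp (-‖x‖ ^ 2 / 2)

lemma wt_pos (x : EE n) : 0 < wt x := Real.exp_pos _

lemma wt_contDiff : ContDiff ℝ 1 (wt : EE n → ℝ) := by
  have h : ContDiff ℝ 1 (fun x : EE n => ‖x‖ ^ 2) := contDiff_norm_sq ℝ
  exact (h.neg.div_const 2).exp

lemma wt_cont : Continuous (wt : EE n → ℝ) := wt_contDiff.continuous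

noncomputable def mu0 (n : ℕ) : Measure (EE n) := volume.withDensity fun x => ENNReal.ofReal (wt x)

lemma integrable_exp_neg {b : ℝ} (hb : 0 < b) :
    Integrable (fun x : EE n => Real.exp (-b * ‖x‖^2)) volume := by
  have := GaussianFourier.integrable_cexp_neg_mul_sq_norm_add (V := EE n) (b := (b:ℂ))
    (by simpa using hb) 0 0
  refine (this.re).congr (Filter.Eventually.of_forall fun x => ?_)
  simp only [zero_mul, add_zero]
  have : (-(b:ℂ) * (‖x‖:ℂ)^2) = ((-b * ‖x‖^2 : ℝ) : ℂ) := by push_cast; ring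
  rw [this, ← Complex.ofReal_exp]
  rfl

lemma wt_integrable : Integrable (wt : EE n → ℝ) volume := by
  refine (integrable_exp_neg (n := n) (b := 1/2) (by norm_num)).congr 
    (Filter.Eventually.of_forall fun x => ?_)
  simp only [wt]; congr 1; ring

lemma mu0_univ : mu0 n Set.univ = ∫⁻ x : EE n, ENNReal.ofReal (wt x) := by
  simp [mu0]

lemma mu0_ne_top : mu0 n Set.univ ≠ ⊤ := by
  rw [mu0_univ]
  exact wt_integrable.lintegral_lt_top.ne

lemma meas_ofReal_wt : Measurable (fun x : EE n => ENNReal.ofReal (wt x)) :=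
  wt_cont.measurable.ennreal_ofReal

lemma mu0_ne_zero : mu0 n Set.univ ≠ 0 := by
  rw [mu0_univ]
  intro h
  rw [lintegral_eq_zero_iff meas_ofReal_wt] at h
  obtain ⟨x, hx⟩ := h.exists
  simp [not_le.2 (wt_pos x)] at hx

noncomputable def cc (n : ℕ) : ENNReal := (mu0 n Set.univ)⁻¹

lemma stdGaussian_eq : stdGaussian n = cc n • mu0 n := rfl

lemma cc_ne_zero : cc n ≠ 0 := by simp [cc, mu0_ne_top]
lemma cc_ne_top : cc n ≠ ⊤ := ENNReal.inv_ne_top.2 mu0_ne_zero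

instance : IsProbabilityMeasure (stdGaussian n) := by
  constructor
  rw [stdGaussian_eq, Measure.smul_apply, smul_eq_mul, cc]
  exact ENNReal.inv_mul_cancel mu0_ne_zero mu0_ne_top

lemma gauss_ac : stdGaussian n ≪ volume := by
  rw [stdGaussian_eq]
  exact (withDensity_absolutelyContinuous _ _).smul_left _

lemma ac_gauss : volume ≪ stdGaussian n := by
  rw [stdGaussian_eq]
  refine Measure.AbsolutelyContinuous.trans ?_ (Measure.absolutelyContinuous_smul cc_ne_zero)
  refine withDensity_absolutelyContinuous' meas_ofReal_wt.aemeasurable ?_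
  exact Filter.Eventually.of_forall fun x => by simp [wt_pos]

instance : Measure.IsOpenPosMeasure (stdGaussian n) := ac_gauss.isOpenPosMeasure

lemma integrable_gauss_iff {g : EE n → ℝ} :
    Integrable g (stdGaussian n) ↔ Integrable (fun x => wt x * g x) volume := by
  rw [stdGaussian_eq, integrable_smul_measure cc_ne_zero cc_ne_top, mu0,
    integrable_withDensity_iff_integrable_smul' meas_ofReal_wt (by simp)]
  simp [ENNReal.toReal_ofReal (wt_pos _).le]

lemma integral_gauss {g : EE n → ℝ} :
    ∫ x, g x ∂(stdGaussian n) = (cc n).toReal * ∫ x, wt x * g x := by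
  rw [stdGaussian_eq, integral_smul_measure, mu0,
    integral_withDensity_eq_integral_toReal_smul meas_ofReal_wt (by simp)]
  simp [ENNReal.toReal_ofReal (wt_pos _).le]

lemma integrable_of_growth {g : EE n → ℝ} (hg : AEStronglyMeasurable g volume) (C a : ℝ)
    (h : ∀ x, |g x| ≤ C * Real.exp (a * ‖x‖)) : Integrable g (stdGaussian n) := by
  rw [integrable_gauss_iff]
  refine ((integrable_exp_neg (n := n) (b := 1/4) (by norm_num)).const_mul 
    (C * Real.exp (a^2))).mono' (wt_cont.aestronglyMeasurable.mul hg) 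
    (Filter.Eventually.of_forall fun x => ?_)
  have hC : 0 ≤ C := by
    have := (abs_nonneg _).trans (h x)
    exact nonneg_of_mul_nonneg_left this (Real.exp_pos _)
  rw [norm_mul, Real.norm_eq_abs, Real.norm_eq_abs, abs_of_pos (wt_pos x)]
  calc wt x * |g x| ≤ wt x * (C * Real.exp (a * ‖x‖)) := by
        gcongr; exact (wt_pos x).le; exact h x
    _ = C * (Real.exp (-‖x‖^2/2 + a * ‖x‖)) := by rw [Real.exp_add, wt]; ring
    _ ≤ C * (Real.exp (a^2 + (-(1/4) * ‖x‖^2))) := by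
        refine mul_le_mul_of_nonneg_left (Real.exp_le_exp.2 ?_) hC
        nlinarith [sq_nonneg (a - ‖x‖/2)]
    _ = _ := by rw [Real.exp_add]; ring

noncomputable def ev (p : MvPolynomial (Fin n) ℝ) (x : EE n) : ℝ := MvPolynomial.eval (fun i => x i) p

lemma ev_contDiff (p : MvPolynomial (Fin n) ℝ) : ContDiff ℝ 1 (ev p) := by
  induction p using MvPolynomial.induction_on with
  | C a =>
    have : (ev (C a) : EE n → ℝ) = fun _ => a := by ext; simp [ev]
    rw [this]; fun_prop
  | add p q hp hq => 
    have : (ev (p + q) : EE n → ℝ) = fun x => ev p x + ev q x := by ext; simp [ev]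
    rw [this]; exact hp.add hq
  | mul_X p i hp => 
    have : (ev (p * X i) : EE n → ℝ) = fun x => ev p x * (EuclideanSpace.proj i : EE n →L[ℝ] ℝ) x := by
      ext; simp [ev]
    rw [this]
    exact hp.mul (EuclideanSpace.proj i : EE n →L[ℝ] ℝ).contDiff

lemma ev_cont (p : MvPolynomial (Fin n) ℝ) : Continuous (ev p) := (ev_contDiff p).continuous

lemma ev_growth (p : MvPolynomial (Fin n) ℝ) :
    ∃ C a : ℝ, 0 ≤ C ∧ ∀ x, |ev p x| ≤ C * Real.exp (a * ‖x‖) := by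
  induction p using MvPolynomial.induction_on with
  | C a => exact ⟨|a|, 0, abs_nonneg _, fun x => by simp [ev]⟩
  | add p q hp hq =>
    obtain ⟨C, a, hC, h⟩ := hp
    obtain ⟨D, b, hD, h'⟩ := hq
    refine ⟨C + D, max a b, by positivity, fun x => ?_⟩
    have e : ev (p + q) x = ev p x + ev q x := by simp [ev]
    rw [e]
    refine (abs_add_le _ _).trans ?_
    rw [add_mul]
    refine add_le_add ((h x).trans ?_) ((h' x).trans ?_)
    · gcongr; exact le_max_left _ _
    · gcongr; exact le_max_right _ _
  | mul_X p i hp =>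
    obtain ⟨C, a, hC, h⟩ := hp
    refine ⟨C, a + 1, hC, fun x => ?_⟩
    have e : ev (p * X i) x = ev p x * x i := by simp [ev]
    rw [e, abs_mul, add_mul, Real.exp_add, ← mul_assoc]
    refine mul_le_mul (h x) ?_ (abs_nonneg _) (by positivity)
    have h1 : |x i| ≤ ‖x‖ := PiLp.norm_apply_le x i
    have h2 := Real.add_one_le_exp (1 * ‖x‖)
    linarith

lemma ev_integrable (p : MvPolynomial (Fin n) ℝ) : Integrable (ev p) (stdGaussian n) := by
  obtain ⟨C, a, hC, h⟩ := ev_growth p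
  exact integrable_of_growth (ev_cont p).aestronglyMeasurable C a h

@[simp] lemma ev_mul (p q : MvPolynomial (Fin n) ℝ) (x : EE n) : ev (p * q) x = ev p x * ev q x := by
  simp [ev]
@[simp] lemma ev_add (p q : MvPolynomial (Fin n) ℝ) (x : EE n) : ev (p + q) x = ev p x + ev q x := by
  simp [ev]
@[simp] lemma ev_sub (p q : MvPolynomial (Fin n) ℝ) (x : EE n) : ev (p - q) x = ev p x - ev q x := by
  simp [ev]
@[simp] lemma ev_smul (c : ℝ) (p : MvPolynomial (Fin n) ℝ) (x : EE n) : ev (c • p) x = c * ev p x := by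
  simp [ev]
@[simp] lemma ev_X (i : Fin n) (x : EE n) : ev (X i) x = x i := by
  simp [ev]
lemma ev_sum {ι : Type*} (s : Finset ι) (f : ι → MvPolynomial (Fin n) ℝ) (x : EE n) : 
    ev (∑ i ∈ s, f i) x = ∑ i ∈ s, ev (f i) x := by
  simp [ev]

lemma ev_memLp (p : MvPolynomial (Fin n) ℝ) : MemLp (ev p) 2 (stdGaussian n) := by
  rw [memLp_two_iff_integrable_sq (ev_cont p).aestronglyMeasurable]
  refine (ev_integrable (p * p)).congr (Filter.Eventually.of_forall fun x => ?_)
  simp [sq]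

lemma ev_hasFDerivAt (p : MvPolynomial (Fin n) ℝ) (x : EE n) :
    HasFDerivAt (ev p) (∑ i, ev (pderiv i p) x • (EuclideanSpace.proj i : EE n →L[ℝ] ℝ)) x := by
  induction p using MvPolynomial.induction_on with
  | C a => 
    simp only [pderiv_C]
    have : (ev (C a) : EE n → ℝ) = fun _ => a := by ext; simp [ev]
    rw [this]
    simpa [ev] using hasFDerivAt_const a x
  | add p q hp hq => 
    have : (ev (p + q) : EE n → ℝ) = ev p + ev q := by ext; simp
    rw [this]
    refine (hp.add hq).congr_fderiv ?_
    simp [add_smul, Finset.sum_add_distrib]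
  | mul_X p i hp => 
    have : (ev (p * X i) : EE n → ℝ) = fun x => ev p x * (EuclideanSpace.proj i : EE n →L[ℝ] ℝ) x := by ext; simp
    rw [this]
    refine (hp.mul (EuclideanSpace.proj i : EE n →L[ℝ] ℝ).hasFDerivAt).congr_fderiv ?_
    symm
    simp only [pderiv_mul, ev_add, ev_mul, ev_X, add_smul, Finset.sum_add_distrib]
    rw [add_comm]
    congr 1
    · rw [Finset.sum_eq_single i]
      · simp [ev]
      · intro j _ hj
        simp [pderiv_X_of_ne hj.symm, ev]
      · simp
    · simp [Finset.smul_sum, smul_smul, mul_comm]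

lemma ev_fderiv_single (p : MvPolynomial (Fin n) ℝ) (x : EE n) (i : Fin n) :
    fderiv ℝ (ev p) x (EuclideanSpace.single i 1) = ev (pderiv i p) x := by
  rw [(ev_hasFDerivAt p x).fderiv]
  simp

end gauss

section loclip
variable {n : ℕ}

lemma localLip_aux (hn : 1 ≤ n) {f : EE n → ℝ} {x : EE n} (hf : DifferentiableAt ℝ f x) :
    localLip f x = ‖fderiv ℝ f x‖ := by
  have : Nonempty (Fin n) := ⟨⟨0, hn⟩⟩
  have : Nontrivial (EE n) := inferInstance
  have : (𝓝[≠] x).NeBot := inferInstance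
  set D := fderiv ℝ f x with hD
  set u : EE n → ℝ := fun y => |f y - f x| / dist y x with hu
  have hu0 : ∀ y, 0 ≤ u y := fun y => by positivity
  have hup : ∀ ε > 0, ∀ᶠ y in 𝓝[≠] x, u y ≤ ‖D‖ + ε := by
    intro ε hε
    have h1 := (hasFDerivAt_iff_isLittleO.1 hf.hasFDerivAt).def hε
    filter_upwards [h1.filter_mono nhdsWithin_le_nhds, self_mem_nhdsWithin] with y hy hne
    have hpos : 0 < dist y x := dist_pos.2 hne
    rw [hu]
    simp only
    rw [div_le_iff₀ hpos, dist_eq_norm]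
    have h2 : ‖D (y - x)‖ ≤ ‖D‖ * ‖y - x‖ := D.le_opNorm _
    have h3 : |f y - f x| ≤ ‖f y - f x - D (y - x)‖ + ‖D (y - x)‖ := by
      have := norm_add_le (f y - f x - D (y - x)) (D (y - x))
      simpa using this
    linarith
  have hbdd : (𝓝[≠] x).IsBoundedUnder (· ≤ ·) u := ⟨‖D‖ + 1, hup 1 one_pos⟩
  have hbddge : (𝓝[≠] x).IsBoundedUnder (· ≥ ·) u := ⟨0, by simp [hu0]⟩
  have hle : localLip f x ≤ ‖D‖ := by
    refine le_of_forall_pos_le_add fun ε hε => ?_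
    exact limsup_le_of_le hbddge.isCoboundedUnder_flip (hup ε hε)
  have key : ∀ v : EE n, v ≠ 0 → |D v| / ‖v‖ ≤ localLip f x := by
    intro v hv
    have hv' : 0 < ‖v‖ := norm_pos_iff.2 hv
    have ht : Tendsto (fun t : ℝ => x + t • v) (𝓝[>] 0) (𝓝[≠] x) := by
      rw [tendsto_nhdsWithin_iff]
      constructor
      · have : Tendsto (fun t : ℝ => x + t • v) (𝓝 0) (𝓝 (x + (0:ℝ) • v)) := by
          apply Continuous.tendsto; fun_prop
        simp at this
        exact this.mono_left nhdsWithin_le_nhds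
      · filter_upwards [self_mem_nhdsWithin] with t (ht : 0 < t)
        simp [ht.ne', hv]
    have hl : Tendsto (u ∘ fun t : ℝ => x + t • v) (𝓝[>] 0) (𝓝 (|D v| / ‖v‖)) := by
      have h1 := (hf.hasFDerivAt.hasLineDerivAt v).tendsto_slope_zero_right
      have h2 := h1.abs.div_const ‖v‖
      refine h2.congr' ?_
      filter_upwards [self_mem_nhdsWithin] with t (ht : 0 < t)
      simp [hu, norm_smul, abs_mul, abs_of_pos ht]
      field_simp
    have : limsup (u ∘ fun t : ℝ => x + t • v) (𝓝[>] 0) ≤ limsup u (𝓝[≠] x) := by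
      rw [limsup_comp]
      refine limsup_le_limsup_of_le ht ?_ hbdd
      exact (hbddge.mono ht).isCoboundedUnder_flip
    rw [hl.limsup_eq] at this
    exact this
  have hnn : 0 ≤ localLip f x := by
    obtain ⟨v, hv⟩ := exists_ne (0 : EE n)
    exact le_trans (by positivity) (key v hv)
  refine le_antisymm hle (D.opNorm_le_bound hnn fun v => ?_)
  by_cases hv : v = 0
  · simp [hv]
  · have := key v hv
    rwa [div_le_iff₀ (norm_pos_iff.2 hv)] at this

lemma ae_diff {f : EE n → ℝ} (hf : LocallyLipschitz f) :
    ∀ᵐ x ∂(volume : Measure (EE n)), DifferentiableAt ℝ f x := by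
  have h : ∀ k : ℕ, ∀ᵐ x ∂(volume : Measure (EE n)), x ∈ Metric.closedBall (0 : EE n) k → 
      DifferentiableWithinAt ℝ f (Metric.closedBall (0 : EE n) k) x := by
    intro k
    obtain ⟨K, hK⟩ := (hf.locallyLipschitzOn (s := Metric.closedBall (0 : EE n) k)).exists_lipschitzOnWith_of_compact
      (isCompact_closedBall _ _)
    exact hK.ae_differentiableWithinAt_of_mem
  filter_upwards [ae_all_iff.2 h] with x hx
  obtain ⟨k, hk⟩ := exists_nat_gt ‖x‖
  have hk' : x ∈ Metric.ball (0 : EE n) k := by simpa using hk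
  exact (hx k (Metric.ball_subset_closedBall hk')).differentiableAt 
    (Metric.closedBall_mem_nhds_of_mem hk')

lemma norm_sq_fun (D : EE n →L[ℝ] ℝ) : ‖D‖^2 = ∑ i, (D (EuclideanSpace.single i 1))^2 := by
  set g := (InnerProductSpace.toDual ℝ (EE n)).symm D with hg
  have h1 : ‖D‖ = ‖g‖ := by rw [hg, LinearIsometryEquiv.norm_map]
  rw [h1, EuclideanSpace.norm_sq_eq]
  refine Finset.sum_congr rfl fun i _ => ?_
  have : D (EuclideanSpace.single i 1) = inner ℝ g (EuclideanSpace.single i 1) := by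
    rw [hg, InnerProductSpace.toDual_symm_apply]
  rw [this]
  simp [EuclideanSpace.inner_single_right]

noncomputable def pd (f : EE n → ℝ) (i : Fin n) (x : EE n) : ℝ :=
  fderiv ℝ f x (EuclideanSpace.single i 1)

lemma ae_localLip (hn : 1 ≤ n) {f : EE n → ℝ} (hf : LocallyLipschitz f) :
    ∀ᵐ x ∂(stdGaussian n), (localLip f x)^2 = ∑ i, (pd f i x)^2 := by
  filter_upwards [gauss_ac.ae_le (ae_diff hf)] with x hx
  rw [localLip_aux hn hx, norm_sq_fun]; rfl

lemma pd_meas (f : EE n → ℝ) (i : Fin n) : Measurable (pd f i) := 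
  measurable_fderiv_apply_const ℝ f _

lemma memW12_iff (hn : 1 ≤ n) {f : EE n → ℝ} : memW12Lip (stdGaussian n) f ↔ 
    LocallyLipschitz f ∧ MemLp f 2 (stdGaussian n) ∧ ∀ i, MemLp (pd f i) 2 (stdGaussian n) := by
  unfold memW12Lip
  refine and_congr_right fun hf => ?_
  have h1 : MemLp f 2 (stdGaussian n) ↔ ∫⁻ x, ENNReal.ofReal ((f x) ^ 2) ∂(stdGaussian n) < ⊤ := by
    rw [memLp_two_iff_integrable_sq hf.continuous.aestronglyMeasurable, Integrable,
      hasFiniteIntegral_iff_ofReal (Eventually.of_forall fun x => sq_nonneg _)]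
    exact and_iff_right (hf.continuous.pow 2).aestronglyMeasurable
  have h2 : ∀ i, MemLp (pd f i) 2 (stdGaussian n) ↔ ∫⁻ x, ENNReal.ofReal ((pd f i x) ^ 2) ∂(stdGaussian n) < ⊤ := by
    intro i
    rw [memLp_two_iff_integrable_sq (pd_meas f i).aestronglyMeasurable, Integrable,
      hasFiniteIntegral_iff_ofReal (Eventually.of_forall fun x => sq_nonneg _)]
    exact and_iff_right ((pd_meas f i).pow_const 2).aestronglyMeasurable
  have h3 : ∫⁻ x, ENNReal.ofReal ((localLip f x) ^ 2) ∂(stdGaussian n) = 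
      ∑ i, ∫⁻ x, ENNReal.ofReal ((pd f i x) ^ 2) ∂(stdGaussian n) := by
    rw [← lintegral_finsetSum _ fun i _ => ((pd_meas f i).pow_const 2).ennreal_ofReal]
    refine lintegral_congr_ae ?_
    filter_upwards [ae_localLip hn hf] with x hx
    rw [hx, ENNReal.ofReal_sum_of_nonneg fun i _ => sq_nonneg _]
  rw [h3, ENNReal.add_lt_top, ← h1, ENNReal.sum_lt_top]
  simp [h2]

lemma integral_localLip (hn : 1 ≤ n) {f : EE n → ℝ} (hf : memW12Lip (stdGaussian n) f) :
    ∫ x, (localLip f x)^2 ∂(stdGaussian n) = ∑ i, ∫ x, (pd f i x)^2 ∂(stdGaussian n) := by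
  rw [memW12_iff hn] at hf
  rw [integral_congr_ae (ae_localLip hn hf.1), integral_finsetSum]
  intro i _
  exact (hf.2.2 i).integrable_sq

lemma ev_memW12 (hn : 1 ≤ n) (p : MvPolynomial (Fin n) ℝ) : memW12Lip (stdGaussian n) (ev p) := by
  rw [memW12_iff hn]
  refine ⟨(ev_contDiff p).locallyLipschitz, ev_memLp p, fun i => ?_⟩
  have : pd (ev p) i = ev (pderiv i p) := by ext x; exact ev_fderiv_single p x i
  rw [this]
  exact ev_memLp _

end loclip

section ibp
variable {n : ℕ}

lemma lip_of_compact {h : EE n → ℝ} (hl : LocallyLipschitz h) (hc : HasCompactSupport h) :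
    ∃ K, LipschitzWith K h := by
  obtain ⟨r, hr⟩ := hc.isCompact.isBounded.subset_closedBall (0 : EE n)
  obtain ⟨K, hK⟩ := (hl.locallyLipschitzOn (s := Metric.closedBall (0 : EE n) (r+1))).exists_lipschitzOnWith_of_compact
      (isCompact_closedBall _ _)
  obtain ⟨M, hM⟩ := hl.continuous.bounded_above_of_compact_support hc
  have hM0 : 0 ≤ M := (norm_nonneg _).trans (hM 0)
  have hz : ∀ x, r < ‖x‖ → h x = 0 := by
    intro x hx
    by_contra hne
    have := hr (subset_tsupport h hne)
    simp at this
    linarith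
  have key : ∀ x y, ‖x‖ ≤ ‖y‖ → dist (h x) (h y) ≤ (max K ⟨M, hM0⟩ : NNReal) * dist x y := by
    intro x y hxy
    have hKm : (K : ℝ) ≤ (max K ⟨M, hM0⟩ : NNReal) := NNReal.coe_le_coe.2 (le_max_left _ _)
    have hMm : M ≤ (max K ⟨M, hM0⟩ : NNReal) := by 
      have : (⟨M, hM0⟩ : NNReal) ≤ max K ⟨M, hM0⟩ := le_max_right _ _
      exact NNReal.coe_le_coe.2 this
    by_cases hy : ‖y‖ ≤ r + 1
    · refine (hK.dist_le_mul x (by simpa using hxy.trans hy) y (by simpa using hy)).trans ?_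
      gcongr
    · push Not at hy
      rw [hz y (by linarith)]
      by_cases hx : ‖x‖ ≤ r
      · have h1 : 1 ≤ dist x y := by
          rw [dist_comm, dist_eq_norm]
          have := norm_sub_norm_le y x
          linarith
        rw [dist_zero_right]
        calc ‖h x‖ ≤ M * 1 := by simpa using hM x
          _ ≤ _ := by gcongr
      · push Not at hx
        rw [hz x hx]; simp; positivity
  refine ⟨max K ⟨M, hM0⟩, LipschitzWith.of_dist_le_mul fun x y => ?_⟩
  rcases le_total ‖x‖ ‖y‖ with hxy | hxy
  · exact key x y hxy
  · rw [dist_comm, dist_comm x y]; exact key y x hxy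

lemma ibp0 {h : EE n → ℝ} (hl : LocallyLipschitz h) (hc : HasCompactSupport h) (v : EE n) :
    ∫ x, fderiv ℝ h x v = 0 := by
  obtain ⟨K, hK⟩ := lip_of_compact hl hc
  have := LipschitzWith.integral_lineDeriv_mul_eq (μ := volume) 
    (LipschitzWith.const (1:ℝ) : LipschitzWith 0 (fun _ : EE n => (1:ℝ))) hK hc (-v)
  have h0 : ∀ x : EE n, lineDeriv ℝ (fun _ : EE n => (1:ℝ)) x (-v) = 0 := by 
    intro x; simp [lineDeriv]
  simp only [h0, zero_mul, integral_zero, neg_neg, mul_one] at this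
  rw [this]
  refine integral_congr_ae ?_
  filter_upwards [hK.ae_differentiableAt] with x hx
  exact hx.lineDeriv_eq_fderiv.symm

lemma locLip_mul {f g : EE n → ℝ} (hf : LocallyLipschitz f) (hg : LocallyLipschitz g) :
    LocallyLipschitz (fun x => f x * g x) := by
  have : ContDiff ℝ 1 (fun p : ℝ × ℝ => p.1 * p.2) := contDiff_fst.mul contDiff_snd
  exact this.locallyLipschitz.comp (hf.prodMk hg)

lemma ibp1 {f φ : EE n → ℝ} (hf : LocallyLipschitz f) (hφ : ContDiff ℝ 1 φ) 
    (hc : HasCompactSupport φ) (v : EE n) :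
    ∫ x, (fderiv ℝ f x v * φ x + f x * fderiv ℝ φ x v) = 0 := by
  have h := ibp0 (locLip_mul hf hφ.locallyLipschitz) hc.mul_left v
  rw [← h]
  refine integral_congr_ae ?_
  filter_upwards [ae_diff hf] with x hx
  have := (hx.hasFDerivAt.mul (hφ.differentiable one_ne_zero x).hasFDerivAt).fderiv
  simp only [Pi.mul_def] at this
  rw [this]
  simp
  ring

lemma ibp2 {f u : EE n → ℝ} (hf : LocallyLipschitz f) (hu : ContDiff ℝ 1 u) (v : EE n)
    (h1 : Integrable (fun x => fderiv ℝ f x v * u x))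
    (h2 : Integrable (fun x => f x * fderiv ℝ u x v))
    (h3 : Integrable (fun x => f x * u x)) :
    ∫ x, (fderiv ℝ f x v * u x + f x * fderiv ℝ u x v) = 0 := by
  let χ : ContDiffBump (0 : EE n) := ⟨1, 2, one_pos, one_lt_two⟩
  have hχ : ContDiff ℝ 1 (χ : EE n → ℝ) := χ.contDiff
  have hcs : HasCompactSupport (χ : EE n → ℝ) := χ.hasCompactSupport
  obtain ⟨C, hC⟩ := (hχ.continuous_fderiv one_ne_zero).bounded_above_of_compact_support
    (hcs.fderiv ℝ)
  have hC0 : 0 ≤ C := (norm_nonneg _).trans (hC 0)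
  let a : ℕ → ℝ := fun k => ((k:ℝ)+1)⁻¹
  have ha : ∀ k, 0 < a k := fun k => by positivity
  have ha1 : ∀ k, a k ≤ 1 := fun k => inv_le_one_of_one_le₀ (by linarith [Nat.cast_nonneg (α := ℝ) k])
  have hat : Tendsto a atTop (𝓝 0) := by
    simpa [a] using tendsto_one_div_add_atTop_nhds_zero_nat (𝕜 := ℝ)
  let χk : ℕ → EE n → ℝ := fun k x => χ (a k • x)
  have hχk : ∀ k, ContDiff ℝ 1 (χk k) := fun k => hχ.comp (contDiff_const_smul _)
  have hχkd : ∀ k x, fderiv ℝ (χk k) x v = a k * fderiv ℝ χ (a k • x) v := by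
    intro k x
    have e1 : HasFDerivAt (fun x : EE n => a k • x) (a k • ContinuousLinearMap.id ℝ (EE n)) x :=
      (hasFDerivAt_id x).const_smul (a k)
    have e2 := ((hχ.differentiable one_ne_zero (a k • x)).hasFDerivAt.comp x e1).fderiv
    have : χk k = χ ∘ fun x : EE n => a k • x := rfl
    rw [this, e2]
    simp
  have hφc : ∀ k, HasCompactSupport (χk k) := by
    intro k
    exact hcs.comp_homeomorph (Homeomorph.smulOfNeZero (a k) (ha k).ne')
  have hzero : ∀ k, ∫ x, (fderiv ℝ f x v * (χk k x * u x) + 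
      f x * (χk k x * fderiv ℝ u x v + u x * (a k * fderiv ℝ χ (a k • x) v))) = 0 := by
    intro k
    rw [← ibp1 hf ((hχk k).mul hu) (hφc k).mul_right v]
    congr 1
    ext x
    have := (((hχk k).differentiable one_ne_zero x).hasFDerivAt.mul (hu.differentiable one_ne_zero x).hasFDerivAt).fderiv
    simp only [Pi.mul_def] at this
    rw [this]
    simp [hχkd]
  have hlim : Tendsto (fun k => ∫ x, (fderiv ℝ f x v * (χk k x * u x) + 
      f x * (χk k x * fderiv ℝ u x v + u x * (a k * fderiv ℝ χ (a k • x) v)))) atTop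
      (𝓝 (∫ x, (fderiv ℝ f x v * u x + f x * fderiv ℝ u x v))) := by
    refine tendsto_integral_of_dominated_convergence 
      (fun x => |fderiv ℝ f x v * u x| + |f x * fderiv ℝ u x v| + (C * ‖v‖) * |f x * u x|) ?_ ?_ ?_ ?_
    · intro k
      have m1 : Continuous (fun x => fderiv ℝ u x v) := (hu.continuous_fderiv one_ne_zero).clm_apply continuous_const
      have m2 : Continuous (fun x => fderiv ℝ χ (a k • x) v) := 
        ((hχ.continuous_fderiv one_ne_zero).comp (continuous_const_smul (a k))).clm_apply continuous_const
      have m3 := (hχk k).continuous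
      have m4 := hu.continuous
      have m5 := hf.continuous
      refine AEStronglyMeasurable.add ?_ ?_
      · exact (measurable_fderiv_apply_const ℝ f v).aestronglyMeasurable.mul (m3.mul m4).aestronglyMeasurable
      · apply Continuous.aestronglyMeasurable
        fun_prop
    · exact (h1.abs.add h2.abs).add (h3.abs.const_mul _)
    · intro k
      refine Eventually.of_forall fun x => ?_
      have b1 : |χk k x| ≤ 1 := by
        rw [abs_of_nonneg χ.nonneg]; exact χ.le_one
      have b2 : |a k * fderiv ℝ χ (a k • x) v| ≤ C * ‖v‖ := by
        rw [abs_mul, abs_of_pos (ha k)]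
        have : |fderiv ℝ χ (a k • x) v| ≤ C * ‖v‖ := 
          ((fderiv ℝ χ (a k • x)).le_opNorm v).trans (by gcongr; exact hC _)
        calc _ ≤ 1 * (C * ‖v‖) := by gcongr; exact ha1 k
          _ = _ := one_mul _
      have e : fderiv ℝ f x v * (χk k x * u x) + 
        f x * (χk k x * fderiv ℝ u x v + u x * (a k * fderiv ℝ χ (a k • x) v)) =
        χk k x * (fderiv ℝ f x v * u x) + χk k x * (f x * fderiv ℝ u x v) + 
          (a k * fderiv ℝ χ (a k • x) v) * (f x * u x) := by ring
      rw [e, Real.norm_eq_abs]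
      refine (abs_add_three _ _ _).trans ?_
      rw [abs_mul (χk k x), abs_mul (χk k x), abs_mul (a k * _)]
      gcongr
      · exact mul_le_of_le_one_left (abs_nonneg _) b1
      · exact mul_le_of_le_one_left (abs_nonneg _) b1
    · refine Eventually.of_forall fun x => ?_
      have t1 : Tendsto (fun k => a k • x) atTop (𝓝 0) := by
        simpa using hat.smul_const x
      have t2 : Tendsto (fun k => χk k x) atTop (𝓝 1) := by
        have := (hχ.continuous.tendsto 0).comp t1
        have h1 : χ (0 : EE n) = 1 := χ.one_of_mem_closedBall (by simp [χ])
        rw [h1] at this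
        exact this
      have t3 : Tendsto (fun k => a k * fderiv ℝ χ (a k • x) v) atTop (𝓝 0) := by
        have hc : Continuous (fun y => fderiv ℝ χ y v) := (hχ.continuous_fderiv one_ne_zero).clm_apply continuous_const
        have := hat.mul ((hc.tendsto 0).comp t1)
        simpa using this
      have := ((t2.mul_const (u x)).const_mul (fderiv ℝ f x v)).add 
        (((t2.mul_const (fderiv ℝ u x v)).add (t3.const_mul (u x))).const_mul (f x))
      simpa using this
  simp only [hzero] at hlim
  exact (tendsto_nhds_unique hlim tendsto_const_nhds)

lemma wt_fderiv (x : EE n) (i : Fin n) : fderiv ℝ wt x (EuclideanSpace.single i 1) = - x i * wt x := by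
  have h1 : HasFDerivAt (fun x : EE n => ‖x‖^2) (2 • innerSL ℝ x) x := 
    (hasStrictFDerivAt_norm_sq x).hasFDerivAt
  have h2 : HasFDerivAt (fun x : EE n => -‖x‖^2/2) ((-(1/2) : ℝ) • (2 • innerSL ℝ x)) x := by
    refine (h1.const_mul (-(1/2) : ℝ)).congr_of_eventuallyEq (Eventually.of_forall fun y => ?_)
    ring
  have h3 : fderiv ℝ wt x = _ := h2.exp.fderiv
  rw [h3]
  simp [wt, EuclideanSpace.inner_single_right]
  ring

lemma ibp (hn : 1 ≤ n) {f : EE n → ℝ} (hf : memW12Lip (stdGaussian n) f) 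
    (q : MvPolynomial (Fin n) ℝ) (i : Fin n) :
    ∫ x, pd f i x * ev q x ∂(stdGaussian n) = 
      ∫ x, f x * ev (X i * q - pderiv i q) x ∂(stdGaussian n) := by
  rw [memW12_iff hn] at hf
  obtain ⟨hl, hf2, hpd⟩ := hf
  have I1 := integrable_gauss_iff.1 ((hpd i).integrable_mul (ev_memLp q))
  have I2 := integrable_gauss_iff.1 (hf2.integrable_mul (ev_memLp (X i * q - pderiv i q)))
  have I3 := integrable_gauss_iff.1 (hf2.integrable_mul (ev_memLp q))
  simp only [Pi.mul_apply] at I1 I2 I3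
  have hu : ContDiff ℝ 1 (fun x : EE n => wt x * ev q x) := wt_contDiff.mul (ev_contDiff q)
  have hud : ∀ x : EE n, fderiv ℝ (fun x : EE n => wt x * ev q x) x (EuclideanSpace.single i 1) 
      = - (wt x * ev (X i * q - pderiv i q) x) := by
    intro x
    have := ((wt_contDiff.differentiable one_ne_zero x).hasFDerivAt.mul 
      ((ev_contDiff q).differentiable one_ne_zero x).hasFDerivAt).fderiv
    simp only [Pi.mul_def] at this
    rw [this]
    simp [wt_fderiv, ev_fderiv_single]
    ring
  have := ibp2 hl hu (EuclideanSpace.single i 1) ?_ ?_ ?_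
  · rw [integral_gauss, integral_gauss]
    congr 1
    rw [← sub_eq_zero, ← integral_sub I1 I2, ← this]
    congr 1
    ext x
    rw [hud]
    simp only [pd, Pi.mul_apply]
    ring
  · refine I1.congr (Eventually.of_forall fun x => ?_)
    simp only [pd, Pi.mul_apply]; ring
  · refine I2.neg.congr (Eventually.of_forall fun x => ?_)
    simp only [hud, Pi.mul_apply, Pi.neg_apply]; ring
  · refine I3.congr (Eventually.of_forall fun x => ?_)
    simp only [Pi.mul_apply]; ring

end ibp

section final
variable {n : ℕ}

lemma inner_toLp {f g : EE n → ℝ} (hf : MemLp f 2 (stdGaussian n)) (hg : MemLp g 2 (stdGaussian n)) :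
    inner ℝ (hf.toLp f) (hg.toLp g) = ∫ x, f x * g x ∂(stdGaussian n) := by
  rw [L2.inner_def]
  refine integral_congr_ae ?_
  filter_upwards [hf.coeFn_toLp, hg.coeFn_toLp] with x h1 h2
  rw [h1, h2]
  simp [mul_comm]

lemma norm_toLp {f : EE n → ℝ} (hf : MemLp f 2 (stdGaussian n)) :
    ‖hf.toLp f‖^2 = ∫ x, (f x)^2 ∂(stdGaussian n) := by
  rw [← real_inner_self_eq_norm_sq, inner_toLp]
  simp [sq]

noncomputable def TT (n : ℕ) : MvPolynomial (Fin n) ℝ →ₗ[ℝ] Lp ℝ 2 (stdGaussian n) where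
  toFun p := (ev_memLp p).toLp (ev p)
  map_add' p q := by
    rw [← MemLp.toLp_add]
    congr 1
    ext x; simp
  map_smul' c p := by
    rw [RingHom.id_apply, ← MemLp.toLp_const_smul]
    congr 1
    ext x; simp

lemma TT_apply (p : MvPolynomial (Fin n) ℝ) : TT n p = (ev_memLp p).toLp (ev p) := rfl

lemma bil (hn : 1 ≤ n) {f : EE n → ℝ} (hf : memW12Lip (stdGaussian n) f)
    (p : MvPolynomial (Fin n) ℝ) :
    ∫ x, f x * ev (Lop n p) x ∂(stdGaussian n) = 
      ∑ i, ∫ x, pd f i x * ev (pderiv i p) x ∂(stdGaussian n) := by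
  simp only [ibp hn hf]
  rw [← integral_finsetSum]
  · simp only [Lop_apply, ev_sum, Finset.mul_sum]
  · intro i _
    exact ((memW12_iff hn).1 hf).2.1.integrable_mul (ev_memLp _)

lemma pd_ev (p : MvPolynomial (Fin n) ℝ) (i : Fin n) : pd (ev p) i = ev (pderiv i p) := by
  ext x; exact ev_fderiv_single p x i

lemma TT_energy (hn : 1 ≤ n) (p q : MvPolynomial (Fin n) ℝ) :
    inner ℝ (TT n p) (TT n (Lop n q)) = 
      ∑ i, ∫ x, ev (pderiv i p) x * ev (pderiv i q) x ∂(stdGaussian n) := by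
  rw [TT_apply, TT_apply, inner_toLp, bil hn (ev_memW12 hn p)]
  simp only [pd_ev]

lemma TT_symm (hn : 1 ≤ n) (p q : MvPolynomial (Fin n) ℝ) :
    inner ℝ (TT n (Lop n p)) (TT n q) = inner ℝ (TT n p) (TT n (Lop n q)) := by
  rw [real_inner_comm, TT_energy hn, TT_energy hn]
  simp only [mul_comm]

lemma complete_aux {g : EE n → ℝ} (hgm : Measurable g) (hg : MemLp g 2 (stdGaussian n)) 
    (h : ∀ p, ∫ x, g x * ev p x ∂(stdGaussian n) = 0) : g =ᵐ[stdGaussian n] 0 := by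
  have hgi : Integrable g (stdGaussian n) := hg.integrable one_le_two
  have key : ∀ ξ : EE n, ∫ x, (g x : ℂ) * Complex.exp (inner ℝ x ξ * Complex.I) ∂(stdGaussian n) = 0 := by
    intro ξ
    have hs := hasSum_integral_of_dominated_convergence (μ := stdGaussian n)
      (F := fun (j : ℕ) (x : EE n) => (g x : ℂ) * ((inner ℝ x ξ * Complex.I)^j / (j.factorial : ℂ)))
      (f := fun x => (g x : ℂ) * Complex.exp (inner ℝ x ξ * Complex.I))
      (fun j x => |g x| * (|inner ℝ x ξ|^j / j.factorial)) ?_ ?_ ?_ ?_ ?_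
    · have hz : ∀ j : ℕ, ∫ x, (g x : ℂ) * ((inner ℝ x ξ * Complex.I)^j / (j.factorial : ℂ)) ∂(stdGaussian n) = 0 := by
        intro j
        have h1 := h ((∑ i, (ξ i) • X i)^j)
        have h2 : ∀ x : EE n, ev ((∑ i, (ξ i) • X i)^j) x = (inner ℝ x ξ)^j := by
          intro x
          simp [ev, PiLp.inner_apply]
        simp only [h2] at h1
        have h3 : ∀ x : EE n, (g x : ℂ) * ((inner ℝ x ξ * Complex.I)^j / (j.factorial : ℂ)) = 
          (Complex.I^j / (j.factorial : ℂ)) * ((g x * (inner ℝ x ξ)^j : ℝ) : ℂ) := by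
          intro x
          push_cast
          rw [mul_pow]; ring
        simp only [h3]
        rw [integral_const_mul, integral_complex_ofReal, h1]
        simp
      simp only [hz] at hs
      exact hs.unique hasSum_zero
    · intro j
      refine Measurable.aestronglyMeasurable ?_
      fun_prop
    · intro j
      refine Eventually.of_forall fun x => ?_
      simp
    · refine Eventually.of_forall fun x => ?_
      exact (Real.summable_pow_div_factorial _).mul_left _
    · have : ∀ x : EE n, ∑' j : ℕ, |g x| * (|inner ℝ x ξ|^j / j.factorial) = |g x| * Real.exp |inner ℝ x ξ| := by
        intro x
        rw [tsum_mul_left, Real.exp_eq_exp_ℝ, NormedSpace.exp_eq_tsum_div]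
      simp only [this]
      have hE : MemLp (fun x : EE n => Real.exp |inner ℝ x ξ|) 2 (stdGaussian n) := by
        have hc : Continuous (fun x : EE n => Real.exp |inner ℝ x ξ|) := by fun_prop
        rw [memLp_two_iff_integrable_sq hc.aestronglyMeasurable]
        refine integrable_of_growth (hc.pow 2).aestronglyMeasurable 1 (2 * ‖ξ‖) fun x => ?_
        rw [abs_of_nonneg (by positivity), ← Real.exp_nat_mul, one_mul]
        apply Real.exp_le_exp.2
        have := abs_real_inner_le_norm x ξ
        push_cast
        nlinarith
      exact hg.abs.integrable_mul hE
    · refine Eventually.of_forall fun x => ?_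
      refine HasSum.mul_left _ ?_
      rw [Complex.exp_eq_exp_ℂ]
      exact NormedSpace.expSeries_div_hasSum_exp _
  have m1 : Measurable (fun x => ENNReal.ofReal (g x)) := hgm.ennreal_ofReal
  have m2 : Measurable (fun x => ENNReal.ofReal (-g x)) := hgm.neg.ennreal_ofReal
  have f1 : ∫⁻ x, ENNReal.ofReal (g x) ∂(stdGaussian n) ≠ ⊤ := hgi.lintegral_lt_top.ne
  have f2 : ∫⁻ x, ENNReal.ofReal (-g x) ∂(stdGaussian n) ≠ ⊤ := hgi.neg.lintegral_lt_top.ne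
  have i1 := isFiniteMeasure_withDensity f1
  have i2 := isFiniteMeasure_withDensity f2
  have hμ : (stdGaussian n).withDensity (fun x => ENNReal.ofReal (g x)) = 
      (stdGaussian n).withDensity (fun x => ENNReal.ofReal (-g x)) := by
    apply Measure.ext_of_charFun
    ext ξ
    rw [charFun_apply, charFun_apply, integral_withDensity_eq_integral_toReal_smul m1 (by simp),
      integral_withDensity_eq_integral_toReal_smul m2 (by simp), ← sub_eq_zero, ← integral_sub, ← key ξ]
    · congr 1
      ext x
      simp only [ENNReal.toReal_ofReal', Complex.real_smul]
      rw [← sub_mul, ← Complex.ofReal_sub]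
      congr 2
      rcases le_total 0 (g x) with h | h
      · rw [max_eq_left h, max_eq_right (by linarith)]; simp
      · rw [max_eq_right h, max_eq_left (by linarith)]; simp
    all_goals
      refine Integrable.mono hgi ?_ (Eventually.of_forall fun x => ?_)
      · refine Measurable.aestronglyMeasurable ?_
        fun_prop
      · rw [norm_smul, Complex.norm_exp_ofReal_mul_I, mul_one, ENNReal.toReal_ofReal']
        simp only [Real.norm_eq_abs, abs_of_nonneg (le_max_right _ (0:ℝ))]
        refine max_le ?_ (abs_nonneg _)
        first | exact le_abs_self _ | exact neg_le_abs _
  have := (withDensity_eq_iff m1.aemeasurable m2.aemeasurable f1).1 hμ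
  filter_upwards [this] with x hx
  by_contra hne
  rcases lt_or_gt_of_ne hne with h | h
  · rw [Pi.zero_apply] at h
    rw [ENNReal.ofReal_of_nonpos h.le, eq_comm, ENNReal.ofReal_eq_zero] at hx
    linarith
  · rw [Pi.zero_apply] at h
    rw [ENNReal.ofReal_of_nonpos (neg_nonpos.2 h.le), ENNReal.ofReal_eq_zero] at hx
    linarith

lemma complete_TT : (⊤ : Submodule ℝ (Lp ℝ 2 (stdGaussian n))) ≤ (⨆ M, Vd (TT n) M).topologicalClosure := by
  rw [top_le_iff, Submodule.topologicalClosure_eq_top_iff, Submodule.eq_bot_iff]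
  intro g hg
  rw [Submodule.mem_orthogonal'] at hg
  have hgL := Lp.memLp g
  have : (g : EE n → ℝ) =ᵐ[stdGaussian n] 0 := by
    refine complete_aux (Lp.stronglyMeasurable g).measurable hgL fun p => ?_
    have h1 : TT n p ∈ ⨆ M, Vd (TT n) M := 
      Submodule.mem_iSup_of_mem p.totalDegree (Submodule.mem_map_of_mem (mem_Rd.2 le_rfl))
    have h2 := hg _ h1
    rw [← Lp.toLp_coeFn g hgL, TT_apply, inner_toLp] at h2
    exact h2
  exact (Lp.eq_zero_iff_ae_eq_zero).2 this

lemma poincare (hn : 1 ≤ n) (m : ℕ) {f : EE n → ℝ} (hf : memW12Lip (stdGaussian n) f)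
    (hf2 : MemLp f 2 (stdGaussian n)) (horth : hf2.toLp f ∈ (Vd (TT n) m)ᗮ) :
    ((m:ℝ)+1) * ∫ x, (f x)^2 ∂(stdGaussian n) ≤ ∫ x, (localLip f x)^2 ∂(stdGaussian n) := by
  rw [integral_localLip hn hf, ← norm_toLp hf2]
  set F := hf2.toLp f with hF
  have hpd := ((memW12_iff hn).1 hf).2.2
  have ht := Submodule.starProjection_tendsto_self (fun M => Vd (TT n) M) 
    (fun a b hab => Vd_mono (TT n) hab) F complete_TT
  refine le_of_tendsto ((ht.norm.pow 2).const_mul ((m:ℝ)+1)) ?_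
  filter_upwards [eventually_ge_atTop m] with M hM
  obtain ⟨p, hp, hTp⟩ := Submodule.mem_map.1 ((Vd (TT n) M).starProjection_apply_mem F)
  have hw : F - TT n p ∈ (Vd (TT n) M)ᗮ := by
    rw [hTp]
    exact Submodule.sub_starProjection_mem_orthogonal _
  have hpo : TT n p ∈ (Vd (TT n) m)ᗮ := by
    have : TT n p = F - (F - TT n p) := by abel
    rw [this]
    exact Submodule.sub_mem _ horth (Submodule.orthogonal_le (Vd_mono (TT n) hM) hw)
  rw [← hTp]
  have hs := spectral (TT n) (TT_symm hn) m M p hp hpo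
  refine hs.trans ?_
  have e1 : inner ℝ F (TT n (Lop n p)) = inner ℝ (TT n p) (TT n (Lop n p)) := by
    have := (Submodule.mem_orthogonal' _ _).1 hw _ (Submodule.mem_map_of_mem (f := TT n) (Lop_mem hp))
    rw [inner_sub_left] at this
    linarith
  rw [TT_symm hn]
  have e2 : inner ℝ (TT n p) (TT n (Lop n p)) = 
      2 * inner ℝ F (TT n (Lop n p)) - inner ℝ (TT n p) (TT n (Lop n p)) := by rw [e1]; ring
  rw [e2, TT_energy hn, hF, TT_apply, inner_toLp, bil hn hf, Finset.mul_sum, ← Finset.sum_sub_distrib]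
  refine Finset.sum_le_sum fun i _ => ?_
  have I1 : Integrable (fun x => pd f i x * ev (pderiv i p) x) (stdGaussian n) := 
    (hpd i).integrable_mul (ev_memLp _)
  have I2 : Integrable (fun x => ev (pderiv i p) x * ev (pderiv i p) x) (stdGaussian n) := 
    (ev_memLp (pderiv i p)).integrable_mul (ev_memLp (pderiv i p))
  rw [← integral_const_mul, ← integral_sub (I1.const_mul 2) I2]
  refine integral_mono ((I1.const_mul 2).sub I2) (hpd i).integrable_sq fun x => ?_
  simp only
  nlinarith [sq_nonneg (pd f i x - ev (pderiv i p) x)]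

noncomputable def mono (n m : ℕ) (s : Sym (Fin (n+1)) m) : MvPolynomial (Fin n) ℝ :=
  ((s : Multiset (Fin (n+1))).map (Fin.cons 1 (fun i => X i) : Fin (n+1) → MvPolynomial (Fin n) ℝ)).prod

lemma Rd_le_span (n m : ℕ) : Rd n m ≤ Submodule.span ℝ (Set.range (mono n m)) := by
  intro p hp
  refine Rd_induct LinearMap.id _ ?_ hp
  intro s a hs
  rw [LinearMap.id_apply]
  let t : Multiset (Fin (n+1)) := (Finsupp.toMultiset s).map Fin.succ + Multiset.replicate (m - s.degree) 0
  have ht : t.card = m := by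
    simp only [t, Multiset.card_add, Multiset.card_map, Multiset.card_replicate, Finsupp.card_toMultiset]
    have : (s.sum fun _ => id) = s.degree := rfl
    omega
  have : monomial s a = a • mono n m ⟨t, ht⟩ := by
    simp only [mono, Sym.coe_mk, t, Multiset.map_add, Multiset.map_map, Multiset.prod_add, Multiset.map_replicate,
      Fin.cons_zero, Multiset.prod_replicate, one_pow, mul_one]
    have : ((Fin.cons 1 (fun i => X i) : Fin (n+1) → MvPolynomial (Fin n) ℝ) ∘ Fin.succ) = fun i => X i := by
      ext i; simp
    rw [this, Finsupp.toMultiset_map, Finsupp.prod_toMultiset, monomial_eq, smul_eq_C_mul]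
    congr 1
    rw [Finsupp.prod_mapDomain_index] <;> simp [pow_add]
  rw [this]
  exact Submodule.smul_mem _ _ (Submodule.subset_span ⟨_, rfl⟩)

lemma finrank_Rd (n m : ℕ) : Module.finrank ℝ (Rd n m) ≤ (n + m).choose m := by
  have : FiniteDimensional ℝ (Submodule.span ℝ (Set.range (mono n m))) := 
    FiniteDimensional.span_of_finite ℝ (Set.finite_range _)
  refine (Submodule.finrank_mono (Rd_le_span n m)).trans ?_
  refine (finrank_range_le_card (R := ℝ) (mono n m)).trans ?_
  rw [Sym.card_sym_eq_choose, Fintype.card_fin]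
  exact le_of_eq (by congr 1; omega)

end final

section last
variable {n : ℕ}

lemma choose_bound (n m : ℕ) : (n + m).choose m ≤ (n+1)^m := by
  induction m with
  | zero => simp
  | succ m ih =>
    have h := Nat.add_one_mul_choose_eq (n + m) m
    have h2 : (n + m + 1) * (n+m).choose m ≤ ((n+1)*(m+1)) * (n+1)^m := 
      Nat.mul_le_mul (by nlinarith) ih
    rw [h] at h2
    have h3 : (n + m + 1).choose (m+1) * (m+1) ≤ (n+1)^(m+1) * (m+1) := by
      calc _ ≤ _ := h2
        _ = _ := by ring
    exact Nat.le_of_mul_le_mul_right h3 (Nat.succ_pos m)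

lemma num1 (hn : 1 ≤ n) {k m : ℕ} (h : k ≤ (n+m).choose m) :
    (n / Real.exp 1) * (k : ℝ) ^ ((1 : ℝ) / n) - n ≤ m := by
  have hn0 : (0:ℝ) < n := by exact_mod_cast hn
  have h1 : (k:ℝ) ≤ (Real.exp 1 * (n + m) / n)^n := by
    have a1 : (k:ℝ) ≤ ((n+m).choose n : ℕ) := by
      rw [Nat.choose_symm_add]; exact_mod_cast h
    have a2 := Nat.choose_le_pow_div (α := ℝ) n (n+m)
    have a3 := Real.pow_div_factorial_le_exp (n:ℝ) hn0.le n
    rw [div_le_iff₀ (by positivity)] at a3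
    refine (a1.trans a2).trans ?_
    rw [div_le_iff₀ (by positivity), div_pow, mul_pow, ← Real.exp_nat_mul, mul_one]
    push_cast
    rw [div_mul_eq_mul_div, le_div_iff₀ (by positivity)]
    calc ((n:ℝ)+m)^n * n^n ≤ ((n:ℝ)+m)^n * (Real.exp n * n.factorial) := by gcongr
      _ = _ := by ring
  have h2 : (k:ℝ)^((1:ℝ)/n) ≤ Real.exp 1 * (n+m)/n := by
    calc (k:ℝ)^((1:ℝ)/n) ≤ ((Real.exp 1 * (n + m) / n)^n)^((1:ℝ)/n) := by gcongr
      _ = _ := by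
        rw [one_div]
        exact Real.pow_rpow_inv_natCast (by positivity) (by omega)
  have : (n / Real.exp 1) * (k : ℝ) ^ ((1 : ℝ) / n) ≤ (n / Real.exp 1) * (Real.exp 1 * (n+m)/n) := by
    gcongr
  have e : (n / Real.exp 1) * (Real.exp 1 * (n+m)/n) = (n:ℝ) + m := by
    field_simp
  linarith

lemma num2 {k m : ℕ} (hk : 1 ≤ k) (h : k ≤ (n+m).choose m) :
    Real.log k / Real.log ((n + 1) * Real.exp 1) ≤ m := by
  have hlog : Real.log ((n + 1) * Real.exp 1) = Real.log (n+1) + 1 := by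
    rw [Real.log_mul (by positivity) (by positivity), Real.log_exp]
  have h0 : 0 ≤ Real.log ((n:ℝ)+1) := Real.log_nonneg (by linarith [Nat.cast_nonneg (α := ℝ) n])
  rw [hlog, div_le_iff₀ (by linarith)]
  have h1 : (k:ℝ) ≤ ((n:ℝ)+1)^m := by exact_mod_cast h.trans (choose_bound n m)
  have h2 := Real.log_le_log (by exact_mod_cast hk) h1
  rw [Real.log_pow] at h2
  nlinarith [Nat.cast_nonneg (α := ℝ) m]

variable (hn : 1 ≤ n) (F : Submodule ℝ (EE n → ℝ)) (hF : ∀ f ∈ F, memW12Lip (stdGaussian n) f)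

noncomputable def JJ : F →ₗ[ℝ] Lp ℝ 2 (stdGaussian n) where
  toFun f := (((memW12_iff hn).1 (hF f f.2)).2.1).toLp (f : EE n → ℝ)
  map_add' f g := by rw [← MemLp.toLp_add]; rfl
  map_smul' c f := by rw [RingHom.id_apply, ← MemLp.toLp_const_smul]; rfl

noncomputable def GG (i : Fin n) : F →ₗ[ℝ] Lp ℝ 2 (stdGaussian n) where
  toFun f := (((memW12_iff hn).1 (hF f f.2)).2.2 i).toLp (pd (f : EE n → ℝ) i)
  map_add' f g := by
    rw [← MemLp.toLp_add]
    apply MemLp.toLp_congr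
    filter_upwards [gauss_ac.ae_le (ae_diff (hF f f.2).1), gauss_ac.ae_le (ae_diff (hF g g.2).1)] with x h1 h2
    have := (h1.hasFDerivAt.add h2.hasFDerivAt).fderiv
    simp only [pd, Submodule.coe_add, Pi.add_apply, this]
    rfl
  map_smul' c f := by
    rw [RingHom.id_apply, ← MemLp.toLp_const_smul]
    apply MemLp.toLp_congr
    filter_upwards [gauss_ac.ae_le (ae_diff (hF f f.2).1)] with x h1
    have := (h1.hasFDerivAt.const_smul c).fderiv
    simp only [pd, Submodule.coe_smul, Pi.smul_apply, this]
    rfl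

lemma JJ_inj : Function.Injective (JJ hn F hF) := by
  rw [← LinearMap.ker_eq_bot, LinearMap.ker_eq_bot']
  intro f hf
  have h1 : ((f : EE n → ℝ)) =ᵐ[stdGaussian n] 0 := by
    exact (MemLp.toLp_eq_toLp_iff (((memW12_iff hn).1 (hF f f.2)).2.1) MemLp.zero).1 hf
  have h2 := (Continuous.ae_eq_iff_eq (stdGaussian n) (hF f f.2).1.continuous continuous_zero).1 h1
  exact Subtype.ext h2

lemma norm_JJ (f : F) : ‖JJ hn F hF f‖^2 = ∫ x, ((f : EE n → ℝ) x)^2 ∂(stdGaussian n) :=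
  norm_toLp (((memW12_iff hn).1 (hF f f.2)).2.1)

lemma norm_GG (f : F) : ∑ i, ‖GG hn F hF i f‖^2 = ∫ x, (localLip (f : EE n → ℝ) x)^2 ∂(stdGaussian n) := by
  rw [integral_localLip hn (hF f f.2)]
  exact Finset.sum_congr rfl fun i _ => norm_toLp (((memW12_iff hn).1 (hF f f.2)).2.2 i)

lemma bdd_quot (hn : 1 ≤ n) (F : Submodule ℝ (EE n → ℝ)) (hF : ∀ f ∈ F, memW12Lip (stdGaussian n) f) [FiniteDimensional ℝ F] : BddAbove { r : ℝ | ∃ f ∈ F, (∫ x, (f x) ^ 2 ∂(stdGaussian n)) ≠ 0 ∧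
      r = (∫ x, (localLip f x) ^ 2 ∂(stdGaussian n)) / (∫ x, (f x) ^ 2 ∂(stdGaussian n)) } := by
  let e := LinearEquiv.ofInjective (JJ hn F hF) (JJ_inj hn F hF)
  have hfd : FiniteDimensional ℝ (LinearMap.range (JJ hn F hF)) := inferInstance
  have hb : ∀ i, ∃ K : ℝ, ∀ f : F, ‖GG hn F hF i f‖ ≤ K * ‖JJ hn F hF f‖ := by
    intro i
    let A := LinearMap.toContinuousLinearMap ((GG hn F hF i).comp e.symm.toLinearMap)
    refine ⟨‖A‖, fun f => ?_⟩
    have := A.le_opNorm (e f)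
    simpa [A, e] using this
  choose K hK using hb
  refine ⟨∑ i, (K i)^2, ?_⟩
  rintro r ⟨f, hf, hne, rfl⟩
  have hpos : 0 < ∫ x, (f x) ^ 2 ∂(stdGaussian n) := 
    lt_of_le_of_ne (integral_nonneg fun x => sq_nonneg _) (Ne.symm hne)
  rw [div_le_iff₀ hpos, ← norm_GG hn F hF ⟨f, hf⟩, ← norm_JJ hn F hF ⟨f, hf⟩, Finset.sum_mul]
  refine Finset.sum_le_sum fun i _ => ?_
  rw [← mul_pow]
  exact pow_le_pow_left₀ (norm_nonneg _) (hK i _) 2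

lemma lower (hn : 1 ≤ n) (F : Submodule ℝ (EE n → ℝ)) (hF : ∀ f ∈ F, memW12Lip (stdGaussian n) f) [FiniteDimensional ℝ F] (m : ℕ) (h : (n+m).choose m < Module.finrank ℝ F) :
    ((m+1 : ℕ) : ℝ) ≤ sSup { r : ℝ | ∃ f ∈ F, (∫ x, (f x) ^ 2 ∂(stdGaussian n)) ≠ 0 ∧
      r = (∫ x, (localLip f x) ^ 2 ∂(stdGaussian n)) / (∫ x, (f x) ^ 2 ∂(stdGaussian n)) } := by
  have hlt : Module.finrank ℝ (Vd (TT n) m) < Module.finrank ℝ F := 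
    ((Submodule.finrank_map_le _ _).trans (finrank_Rd n m)).trans_lt h
  have hker := LinearMap.ker_ne_bot_of_finrank_lt 
    (f := ((Vd (TT n) m).orthogonalProjectionOnto : _ →ₗ[ℝ] _).comp (JJ hn F hF)) hlt
  obtain ⟨f, hf, hf0⟩ := (Submodule.ne_bot_iff _).1 hker
  have ho : JJ hn F hF f ∈ (Vd (TT n) m)ᗮ := by
    rw [LinearMap.mem_ker] at hf
    exact Submodule.orthogonalProjectionOnto_eq_zero_iff.1 hf
  have hJ : JJ hn F hF f ≠ 0 := fun h0 => hf0 (JJ_inj hn F hF (by rw [h0, map_zero]))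
  have hpos : 0 < ∫ x, ((f : EE n → ℝ) x) ^ 2 ∂(stdGaussian n) := by
    rw [← norm_JJ hn F hF]
    have := norm_pos_iff.2 hJ
    positivity
  have hp := poincare hn m (hF f f.2) (((memW12_iff hn).1 (hF f f.2)).2.1) ho
  refine le_trans ?_ (le_csSup (bdd_quot hn F hF) ⟨f, f.2, hpos.ne', rfl⟩)
  rw [le_div_iff₀ hpos]
  push_cast
  exact hp

lemma nonempty_F (hn : 1 ≤ n) (k : ℕ) : ∃ F : Submodule ℝ (EE n → ℝ), Module.finrank ℝ F = k ∧
    (∀ f ∈ F, memW12Lip (stdGaussian n) f) := by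
  let evL : MvPolynomial (Fin n) ℝ →ₗ[ℝ] (EE n → ℝ) :=
    { toFun := ev, map_add' := fun p q => by ext x; simp, map_smul' := fun c p => by ext x; simp }
  have hinj : Function.Injective evL := by
    intro p q hpq
    refine MvPolynomial.funext fun x => ?_
    exact congrFun hpq (WithLp.toLp 2 x)
  let b : Fin k → MvPolynomial (Fin n) ℝ := fun j => monomial (Finsupp.single ⟨0, hn⟩ (j : ℕ)) 1
  have hli : LinearIndependent ℝ b := by
    have := (basisMonomials (Fin n) ℝ).linearIndependent.comp 
      (fun j : Fin k => Finsupp.single (⟨0, hn⟩ : Fin n) (j : ℕ)) ?_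
    · simpa [b, Function.comp_def] using this
    · intro i j hij
      exact Fin.ext (Finsupp.single_injective _ hij)
  refine ⟨(Submodule.span ℝ (Set.range b)).map evL, ?_, ?_⟩
  · rw [(Submodule.equivMapOfInjective evL hinj _).symm.finrank_eq, finrank_span_eq_card hli, Fintype.card_fin]
  · rintro f ⟨p, _, rfl⟩
    exact ev_memW12 hn p

end last
end GaussEig

/-- **Lower bound for the Gaussian eigenvalues:**
`λ_k^Lip(ℝⁿ,|·|,γⁿ) ≥ max( (n/e)·k^{1/n} - n , log k / log((n+1)e) )` for `k ≥ 1`. -/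
theorem gaussian_eigenvalue_lower_bound
    (n : ℕ) (hn : 1 ≤ n) (k : ℕ) (hk : 1 ≤ k) :
    max ((n / Real.exp 1) * (k : ℝ) ^ ((1 : ℝ) / n) - n)
        (Real.log k / Real.log ((n + 1) * Real.exp 1)) ≤
      lambdaLip (stdGaussian n) k := by
  obtain ⟨F₀, hF₀, hF₀'⟩ := GaussEig.nonempty_F hn k
  refine le_csInf ⟨_, F₀, hF₀, hF₀', rfl⟩ ?_
  rintro a ⟨F, hFk, hF, rfl⟩
  have hfd : FiniteDimensional ℝ F := FiniteDimensional.of_finrank_pos (by omega)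
  have hex : ∃ m, k ≤ (n + m).choose m := by
    refine ⟨k, ?_⟩
    rw [← Nat.choose_symm_add]
    calc k ≤ (1 + k).choose 1 := by simp
      _ ≤ (n + k).choose n := by
        rw [Nat.choose_symm_add, Nat.choose_symm_add]
        exact Nat.choose_le_choose k (by omega)
  classical
  have hm := Nat.find_spec hex
  have hmin := fun m => Nat.find_min (m := m) hex
  set m := Nat.find hex
  refine (max_le (GaussEig.num1 hn hm) (GaussEig.num2 hk hm)).trans ?_
  rcases hm0 : m with _ | m'
  · refine le_trans (by simp) (Real.sSup_nonneg ?_)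
    rintro r ⟨f, hf, -, rfl⟩
    exact div_nonneg (integral_nonneg fun x => sq_nonneg _) (integral_nonneg fun x => sq_nonneg _)
  · refine GaussEig.lower hn F hF m' ?_
    have := hmin m' (by omega)
    rw [hFk]; omega
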